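/- arXiv:1901.10691 — 2 statements merged into one kernel-verified Lean document; each statement's English description precedes it below -/
import Mathlib

section
/- Let λ be a finite measure on a measurable space, and let μ, ν, μ′ be probability measures with densities p, q, p′ with respect to λ, where p, p′, q are λ-a.e. bounded above and below by positive constants. Then the one-sided derivative d/dε D_KL((1−ε)μ + εμ′ ‖ ν)|_{ε=0+} exists and equals ∫ log(p/q) d(μ′ − μ); equivalently, x ↦ log(p(x)/q(x)) is an influence function of μ ↦ D_KL(μ‖ν) at μ. -/
/-!
Writing `r ε = p + ε (p' - p)` for the density of the mixture, the divergence is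
`∫ r ε (log (r ε) - log q) ∂lam` for `ε ∈ [0, 1]` (`klDivergence_withDensity`). For `|ε|` small,
`r ε` stays between two positive constants, so the integrand and its `ε`-derivative
`(p' - p) (log (r ε) - log q) + (p' - p)` are uniformly bounded, and one may differentiate under the
integral sign since `lam` is finite. At `ε = 0` the derivative is
`∫ (p' - p) log (p / q) ∂lam + ∫ (p' - p) ∂lam`, whose last term vanishes because both densities
have mass one.
-/

open MeasureTheory Set
open scoped ENNReal

/-- Kullback–Leibler divergence `D_KL(α‖β) = ∫ log(dα/dβ) dα` (for `α ≪ β`). -/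
noncomputable def klDivergence {Ω : Type*} [MeasurableSpace Ω] (α β : Measure Ω) : ℝ :=
  ∫ x, Real.log (α.rnDeriv β x).toReal ∂α

lemma abs_log_le_of_mem {a b x : ℝ} (ha : 0 < a) (hax : a ≤ x) (hxb : x ≤ b) :
    |Real.log x| ≤ |Real.log a| + |Real.log b| := by
  have h1 := Real.log_le_log ha hax
  have h2 := Real.log_le_log (ha.trans_le hax) hxb
  rw [abs_le]
  constructor
  · linarith [neg_abs_le (Real.log a), abs_nonneg (Real.log b)]
  · linarith [le_abs_self (Real.log b), abs_nonneg (Real.log a)]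

lemma integral_withDensity_ofReal {Ω : Type*} [MeasurableSpace Ω] (lam : Measure Ω)
    {p : Ω → ℝ} (hp : Measurable p) (hpos : ∀ᵐ x ∂lam, 0 < p x) (f : Ω → ℝ) :
    ∫ x, f x ∂(lam.withDensity fun x => ENNReal.ofReal (p x)) = ∫ x, p x * f x ∂lam := by
  rw [integral_withDensity_eq_integral_toReal_smul hp.ennreal_ofReal (by simp)]
  refine integral_congr_ae ?_
  filter_upwards [hpos] with x hx
  simp [ENNReal.toReal_ofReal hx.le]

/-- The divergence between two measures with a.e. positive densities `r`, `q`, through the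
identity `d(r·lam)/d(q·lam) = r / q`. -/
lemma klDivergence_withDensity {Ω : Type*} [MeasurableSpace Ω] (lam : Measure Ω)
    {r q : Ω → ℝ} (hr : Measurable r) (hq : Measurable q)
    (hrpos : ∀ᵐ x ∂lam, 0 < r x) (hqpos : ∀ᵐ x ∂lam, 0 < q x)
    [IsFiniteMeasure (lam.withDensity fun x => ENNReal.ofReal (q x))] :
    klDivergence (lam.withDensity fun x => ENNReal.ofReal (r x))
        (lam.withDensity fun x => ENNReal.ofReal (q x))
      = ∫ x, r x * (Real.log (r x) - Real.log (q x)) ∂lam := by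
  have hrq : Measurable fun x => ENNReal.ofReal (r x / q x) := (hr.div hq).ennreal_ofReal
  have hα : lam.withDensity (fun x => ENNReal.ofReal (r x))
      = (lam.withDensity fun x => ENNReal.ofReal (q x)).withDensity
        fun x => ENNReal.ofReal (r x / q x) := by
    rw [← withDensity_mul _ hq.ennreal_ofReal hrq]
    refine withDensity_congr_ae ?_
    filter_upwards [hqpos] with x hx
    rw [Pi.mul_apply, ← ENNReal.ofReal_mul hx.le, mul_div_cancel₀ _ hx.ne']
  have hd : ∀ᵐ x ∂(lam.withDensity fun x => ENNReal.ofReal (r x)),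
      (lam.withDensity fun x => ENNReal.ofReal (r x)).rnDeriv
        (lam.withDensity fun x => ENNReal.ofReal (q x)) x = ENNReal.ofReal (r x / q x) := by
    have h := Measure.rnDeriv_withDensity (lam.withDensity fun x => ENNReal.ofReal (q x)) hrq
    rw [← hα] at h
    refine Measure.AbsolutelyContinuous.ae_le ?_ h
    rw [hα]
    exact withDensity_absolutelyContinuous _ _
  have hac : lam.withDensity (fun x => ENNReal.ofReal (r x)) ≪ lam :=
    withDensity_absolutelyContinuous _ _
  have hlog : (fun x => Real.log ((lam.withDensity fun x => ENNReal.ofReal (r x)).rnDeriv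
        (lam.withDensity fun x => ENNReal.ofReal (q x)) x).toReal)
      =ᵐ[lam.withDensity fun x => ENNReal.ofReal (r x)]
        fun x => Real.log (r x) - Real.log (q x) := by
    filter_upwards [hd, hac.ae_le hrpos, hac.ae_le hqpos] with x hx h1 h2
    rw [hx, ENNReal.toReal_ofReal (div_pos h1 h2).le, Real.log_div h1.ne' h2.ne']
  rw [klDivergence, integral_congr_ae hlog, integral_withDensity_ofReal lam hr hrpos]

lemma withDensity_mixture {Ω : Type*} [MeasurableSpace Ω] (lam : Measure Ω)
    {p p' : Ω → ℝ} (hp : Measurable p) (hp' : Measurable p')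
    (hpos : ∀ᵐ x ∂lam, 0 < p x) (hpos' : ∀ᵐ x ∂lam, 0 < p' x)
    {ε : ℝ} (h0 : 0 ≤ ε) (h1 : ε ≤ 1) :
    ENNReal.ofReal (1 - ε) • (lam.withDensity fun x => ENNReal.ofReal (p x))
        + ENNReal.ofReal ε • (lam.withDensity fun x => ENNReal.ofReal (p' x))
      = lam.withDensity fun x => ENNReal.ofReal (p x + ε * (p' x - p x)) := by
  rw [← withDensity_smul _ hp.ennreal_ofReal, ← withDensity_smul _ hp'.ennreal_ofReal,
    ← withDensity_add_left (hp.ennreal_ofReal.const_smul _)]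
  refine withDensity_congr_ae ?_
  filter_upwards [hpos, hpos'] with x hx hx'
  have h1' : 0 ≤ 1 - ε := by linarith
  simp only [Pi.add_apply, Pi.smul_apply, smul_eq_mul]
  rw [← ENNReal.ofReal_mul h1', ← ENNReal.ofReal_mul h0,
    ← ENNReal.ofReal_add (by positivity) (by positivity)]
  congr 1
  ring

/-- Differentiation under the integral sign: uniform bounds on the densities dominate the
derivative of the integrand for `ε` in a two-sided neighbourhood of `0`. -/
lemma hasDerivAt_integral_mixture {Ω : Type*} [MeasurableSpace Ω]
    (lam : Measure Ω) [IsFiniteMeasure lam]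
    {p q p' : Ω → ℝ} (hp : Measurable p) (hq : Measurable q) (hp' : Measurable p')
    {cp Cp cq Cq cp' Cp' : ℝ} (hcp : 0 < cp) (hpbd : ∀ᵐ x ∂lam, cp ≤ p x ∧ p x ≤ Cp)
    (hcq : 0 < cq) (hqbd : ∀ᵐ x ∂lam, cq ≤ q x ∧ q x ≤ Cq)
    (hcp' : 0 < cp') (hp'bd : ∀ᵐ x ∂lam, cp' ≤ p' x ∧ p' x ≤ Cp') :
    HasDerivAt (fun ε : ℝ => ∫ x, (p x + ε * (p' x - p x)) *
        (Real.log (p x + ε * (p' x - p x)) - Real.log (q x)) ∂lam)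
      (∫ x, ((p' x - p x) * (Real.log (p x) - Real.log (q x)) + (p' x - p x)) ∂lam) 0 := by
  set M : ℝ := |Cp| + |Cp'| + 1 with hM
  have hMpos : 0 < M := by positivity
  -- `|ε| < δ` moves the density by at most `cp / 2`, half of its lower bound at `ε = 0`.
  set δ : ℝ := cp / (2 * M) with hδ
  have hδpos : 0 < δ := by positivity
  have hδM : δ * M = cp / 2 := by rw [hδ]; field_simp
  set L : ℝ := |Real.log (cp / 2)| + |Real.log (|Cp| + cp / 2)|
    + (|Real.log cq| + |Real.log Cq|) with hL
  have hdiff : ∀ᵐ x ∂lam, |p' x - p x| ≤ M := by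
    filter_upwards [hpbd, hp'bd] with x h h'
    rw [abs_le]
    constructor <;> linarith [le_abs_self Cp, le_abs_self Cp', abs_nonneg Cp, abs_nonneg Cp']
  have hr : ∀ᵐ x ∂lam, ∀ ε ∈ Metric.ball (0 : ℝ) δ,
      cp / 2 ≤ p x + ε * (p' x - p x) ∧ p x + ε * (p' x - p x) ≤ |Cp| + cp / 2 := by
    filter_upwards [hpbd, hdiff] with x h h' ε hε
    rw [Metric.mem_ball, dist_zero_right, Real.norm_eq_abs] at hε
    have : |ε * (p' x - p x)| ≤ cp / 2 := by
      rw [abs_mul, ← hδM]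
      exact mul_le_mul hε.le h' (abs_nonneg _) hδpos.le
    rw [abs_le] at this
    constructor <;> linarith [le_abs_self Cp]
  have hlog : ∀ᵐ x ∂lam, ∀ ε ∈ Metric.ball (0 : ℝ) δ,
      |Real.log (p x + ε * (p' x - p x)) - Real.log (q x)| ≤ L := by
    filter_upwards [hr, hqbd] with x h h' ε hε
    have h1 := abs_log_le_of_mem (by positivity) (h ε hε).1 (h ε hε).2
    have h2 := abs_log_le_of_mem hcq h'.1 h'.2
    exact (abs_sub _ _).trans (add_le_add h1 h2)
  have hmem : (0 : ℝ) ∈ Metric.ball (0 : ℝ) δ := Metric.mem_ball_self hδpos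
  have key := hasDerivAt_integral_of_dominated_loc_of_deriv_le (μ := lam) (x₀ := (0 : ℝ))
    (s := Metric.ball (0 : ℝ) δ)
    (F := fun ε x => (p x + ε * (p' x - p x)) *
        (Real.log (p x + ε * (p' x - p x)) - Real.log (q x)))
    (F' := fun ε x => (p' x - p x) *
        (Real.log (p x + ε * (p' x - p x)) - Real.log (q x)) + (p' x - p x))
    (bound := fun _ => M * L + M)
    (Metric.ball_mem_nhds _ hδpos)
    (Filter.Eventually.of_forall fun ε => Measurable.aestronglyMeasurable (by fun_prop))
    ?_ (Measurable.aestronglyMeasurable (by fun_prop)) ?_ (integrable_const _) ?_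
  · simpa using key.2
  · refine Integrable.of_bound (C := (|Cp| + cp / 2) * L)
      (Measurable.aestronglyMeasurable (by fun_prop)) ?_
    filter_upwards [hr, hlog] with x h h'
    rw [Real.norm_eq_abs, abs_mul]
    refine mul_le_mul ?_ (h' 0 hmem) (abs_nonneg _) (by positivity)
    rw [abs_of_nonneg (le_trans (by positivity) (h 0 hmem).1)]
    exact (h 0 hmem).2
  · filter_upwards [hdiff, hlog] with x h h' ε hε
    rw [Real.norm_eq_abs]
    refine (abs_add_le _ _).trans (add_le_add ?_ h)
    rw [abs_mul]
    exact mul_le_mul h (h' ε hε) (abs_nonneg _) hMpos.le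
  · filter_upwards [hr] with x h ε hε
    have hpos : 0 < p x + ε * (p' x - p x) := lt_of_lt_of_le (by positivity) (h ε hε).1
    have h1 : HasDerivAt (fun ε : ℝ => p x + ε * (p' x - p x)) (p' x - p x) ε := by
      simpa using ((hasDerivAt_id ε).mul_const (p' x - p x)).const_add (p x)
    have h2 := h1.fun_mul ((h1.log hpos.ne').sub_const (Real.log (q x)))
    rwa [mul_div_cancel₀ _ hpos.ne'] at h2

/-- **The influence function of the (reverse) Kullback–Leibler divergence**
`μ ↦ D_KL(μ‖ν)`.  Let `lam` be a finite measure and let `μ, ν, μ'` be probability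
measures with densities `p, q, p'` w.r.t. `lam`, each bounded above and below by
positive constants `lam`-a.e.  Then `ε ↦ D_KL((1-ε) μ + ε μ' ‖ ν)` has one-sided
derivative at `ε = 0⁺` equal to `∫ log(p/q) dμ' - ∫ log(p/q) dμ`, i.e.
`x ↦ log(p(x)/q(x))` is an influence function of `μ ↦ D_KL(μ‖ν)` at `μ`. -/
theorem kl_influence_function {Ω : Type*} [MeasurableSpace Ω]
    (lam : Measure Ω) [IsFiniteMeasure lam]
    (p q p' : Ω → ℝ) (hp : Measurable p) (hq : Measurable q) (hp' : Measurable p')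
    (cp Cp : ℝ) (hcp : 0 < cp) (hpbd : ∀ᵐ x ∂lam, cp ≤ p x ∧ p x ≤ Cp)
    (cq Cq : ℝ) (hcq : 0 < cq) (hqbd : ∀ᵐ x ∂lam, cq ≤ q x ∧ q x ≤ Cq)
    (cp' Cp' : ℝ) (hcp' : 0 < cp') (hp'bd : ∀ᵐ x ∂lam, cp' ≤ p' x ∧ p' x ≤ Cp')
    (hμ : IsProbabilityMeasure (lam.withDensity fun x => ENNReal.ofReal (p x)))
    (hν : IsProbabilityMeasure (lam.withDensity fun x => ENNReal.ofReal (q x)))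
    (hμ' : IsProbabilityMeasure (lam.withDensity fun x => ENNReal.ofReal (p' x))) :
    HasDerivWithinAt
      (fun ε : ℝ => klDivergence
        (ENNReal.ofReal (1 - ε) • (lam.withDensity fun x => ENNReal.ofReal (p x))
          + ENNReal.ofReal ε • (lam.withDensity fun x => ENNReal.ofReal (p' x)))
        (lam.withDensity fun x => ENNReal.ofReal (q x)))
      ((∫ x, Real.log (p x / q x) ∂(lam.withDensity fun x => ENNReal.ofReal (p' x)))
        - ∫ x, Real.log (p x / q x) ∂(lam.withDensity fun x => ENNReal.ofReal (p x)))
      (Ici (0:ℝ)) 0 := by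
  have hpp : ∀ᵐ x ∂lam, 0 < p x := hpbd.mono fun x h => hcp.trans_le h.1
  have hqp : ∀ᵐ x ∂lam, 0 < q x := hqbd.mono fun x h => hcq.trans_le h.1
  have hpp' : ∀ᵐ x ∂lam, 0 < p' x := hp'bd.mono fun x h => hcp'.trans_le h.1
  have hkl : ∀ ε ∈ Icc (0 : ℝ) 1, klDivergence
      (ENNReal.ofReal (1 - ε) • (lam.withDensity fun x => ENNReal.ofReal (p x))
        + ENNReal.ofReal ε • (lam.withDensity fun x => ENNReal.ofReal (p' x)))
      (lam.withDensity fun x => ENNReal.ofReal (q x))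
      = ∫ x, (p x + ε * (p' x - p x)) *
        (Real.log (p x + ε * (p' x - p x)) - Real.log (q x)) ∂lam := by
    intro ε hε
    rw [withDensity_mixture lam hp hp' hpp hpp' hε.1 hε.2]
    refine klDivergence_withDensity lam (by fun_prop) hq ?_ hqp
    filter_upwards [hpbd, hp'bd] with x h h'
    have hm : 0 < min cp cp' := lt_min hcp (by assumption)
    -- a convex combination of two numbers that are at least this minimum
    have h1 := mul_le_mul_of_nonneg_left ((min_le_left cp cp').trans h.1) (sub_nonneg.2 hε.2)
    have h2 := mul_le_mul_of_nonneg_left ((min_le_right cp cp').trans h'.1) hε.1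
    linarith
  have hpi : Integrable p lam := Integrable.of_bound (C := Cp) hp.aestronglyMeasurable <| by
    filter_upwards [hpbd, hpp] with x h h0
    rw [Real.norm_of_nonneg h0.le]
    exact h.2
  have hpi' : Integrable p' lam := Integrable.of_bound (C := Cp') hp'.aestronglyMeasurable <| by
    filter_upwards [hp'bd, hpp'] with x h h0
    rw [Real.norm_of_nonneg h0.le]
    exact h.2
  have hli : ∀ f : Ω → ℝ, Integrable f lam →
      Integrable (fun x => f x * (Real.log (p x) - Real.log (q x))) lam := by
    intro f hf
    refine hf.mul_bdd
      (c := |Real.log cp| + |Real.log Cp| + (|Real.log cq| + |Real.log Cq|))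
      (Measurable.aestronglyMeasurable (by fun_prop)) ?_
    filter_upwards [hpbd, hqbd] with x h h'
    exact (abs_sub _ _).trans
      (add_le_add (abs_log_le_of_mem hcp h.1 h.2) (abs_log_le_of_mem hcq h'.1 h'.2))
  have hone : ∫ x, p x ∂lam = 1 := by
    have h := integral_withDensity_ofReal lam hp hpp fun _ => 1
    simpa using h.symm
  have hone' : ∫ x, p' x ∂lam = 1 := by
    have h := integral_withDensity_ofReal lam hp' hpp' fun _ => 1
    simpa using h.symm
  have hlogdiv : ∀ f : Ω → ℝ, ∫ x, f x * Real.log (p x / q x) ∂lam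
      = ∫ x, f x * (Real.log (p x) - Real.log (q x)) ∂lam := fun f =>
    integral_congr_ae <| by
      filter_upwards [hpp, hqp] with x h h'
      rw [Real.log_div h.ne' h'.ne']
  have hval : ∫ x, ((p' x - p x) * (Real.log (p x) - Real.log (q x)) + (p' x - p x)) ∂lam
      = (∫ x, Real.log (p x / q x) ∂(lam.withDensity fun x => ENNReal.ofReal (p' x)))
        - ∫ x, Real.log (p x / q x) ∂(lam.withDensity fun x => ENNReal.ofReal (p x)) := by
    rw [integral_withDensity_ofReal lam hp hpp, integral_withDensity_ofReal lam hp' hpp',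
      hlogdiv, hlogdiv, ← integral_sub (hli _ hpi') (hli _ hpi),
      integral_add (g := fun x => p' x - p x) (hli (fun x => p' x - p x) (hpi'.sub hpi))
        (hpi'.sub hpi),
      integral_sub hpi' hpi, hone, hone', sub_self, add_zero]
    simp only [sub_mul]
  have hder := hasDerivAt_integral_mixture lam hp hq hp' hcp hpbd hcq hqbd hcp' hp'bd
  rw [hval] at hder
  refine hder.hasDerivWithinAt.congr_of_eventuallyEq ?_ (hkl 0 (by simp))
  filter_upwards [Icc_mem_nhdsGE (zero_lt_one' ℝ)] with ε hε using hkl ε hε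
end

section
/- Consider a finite Markov decision process with state set S, action set A, transition probabilities p(s′|s,a), reward function R : S×A → ℝ, discount factor γ ∈ (0,1), and initial distribution p₀ on S. Let θ ∈ ℝ ↦ π_θ be a family of policies such that for each (s,a) the map θ ↦ π_θ(a|s) is differentiable and π_θ(a|s) > 0. Then the expected discounted reward J(θ) = Σ_s p₀(s) V^{π_θ}(s) is differentiable in θ with dJ/dθ = Σ_{t=0}^∞ γ^t Σ_s p_t^{π_θ}(s) Σ_a (∂/∂θ π_θ(a|s)) Q^{π_θ}(s,a) (the policy gradient theorem). -/
/-!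
The proof rests on the performance difference identity. Fix `θ`, and let
`ρ s = ∑ t, γ ^ t * pt θ t s` be the unnormalized discounted occupancy of `pol θ`. It satisfies the
flow equation `ρ s' = p₀ s' + γ ∑ s a, ρ s * pol θ s a * P s a s'` (`occupancy_flow`), and pairing
this with the Bellman recursion for `V θ' - V θ` gives, for every `θ'`,

`J θ' - J θ = ∑ s, ρ s * ∑ a, (pol θ' s a - pol θ s a) * Q θ' s a` (`performance_difference`).

The weights `ρ` do not depend on `θ'`, so after division by `θ' - θ` only the limit
`Q θ' → Q θ` is needed. It follows from `V θ' → V θ`, which is a contraction estimate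
(`value_sub_le`). No differentiability of `V` is assumed or used along the way.
-/

open Filter Topology

/-- A stochastic average of `D` is bounded by any uniform bound of `|D|`. -/
lemma abs_sum_weight_mul_le {ι : Type*} [Fintype ι] (w D : ι → ℝ) (M : ℝ)
    (hw : ∀ i, 0 ≤ w i) (hw1 : ∑ i, w i = 1) (hD : ∀ i, |D i| ≤ M) :
    |∑ i, w i * D i| ≤ M :=
  calc |∑ i, w i * D i| ≤ ∑ i, |w i * D i| := Finset.abs_sum_le_sum_abs _ _
    _ ≤ ∑ i, w i * M := by
        refine Finset.sum_le_sum fun i _ => ?_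
        rw [abs_mul, abs_of_nonneg (hw i)]
        exact mul_le_mul_of_nonneg_left (hD i) (hw i)
    _ = M := by rw [← Finset.sum_mul, hw1, one_mul]

/-- Bellman recursion for the difference of the value functions `V'`, `V` of two policies `π'`,
`π`: a one-step advantage term evaluated with `Q'`, plus a discounted average under `π`. -/
lemma value_sub {S A : Type*} [Fintype S] [Fintype A]
    (P : S → A → S → ℝ) (R : S → A → ℝ) (γ : ℝ) (π π' Q Q' : S → A → ℝ) (V V' : S → ℝ)
    (hQ : ∀ s a, Q s a = R s a + γ * ∑ s', P s a s' * V s')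
    (hV : ∀ s, V s = ∑ a, π s a * Q s a)
    (hQ' : ∀ s a, Q' s a = R s a + γ * ∑ s', P s a s' * V' s')
    (hV' : ∀ s, V' s = ∑ a, π' s a * Q' s a) (s : S) :
    V' s - V s = ∑ a, (π' s a - π s a) * Q' s a
      + γ * ∑ a, π s a * ∑ s', P s a s' * (V' s' - V s') := by
  have hQsub : ∀ a, γ * ∑ s', P s a s' * (V' s' - V s') = Q' s a - Q s a := by
    intro a
    simp only [hQ, hQ', mul_sub, Finset.sum_sub_distrib]
    ring
  rw [hV, hV', Finset.mul_sum, ← Finset.sum_sub_distrib, ← Finset.sum_add_distrib]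
  refine Finset.sum_congr rfl fun a _ => ?_
  rw [mul_left_comm, hQsub]
  ring

/-- Contraction estimate: two value functions differ by at most `1 / (1 - γ)` times the absolute
one-step advantage between `π'` and `π`, summed over states. Only the action values `Q` of `π` occur on the
right, so the bound tends to `0` as `π'` tends to `π`. -/
lemma value_sub_le {S A : Type*} [Fintype S] [Fintype A] [Nonempty S]
    (P : S → A → S → ℝ) (hP0 : ∀ s a s', 0 ≤ P s a s') (hP1 : ∀ s a, ∑ s', P s a s' = 1)
    (R : S → A → ℝ) (γ : ℝ) (hγ0 : 0 < γ) (hγ1 : γ < 1)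
    (π π' Q Q' : S → A → ℝ) (V V' : S → ℝ)
    (hpos : ∀ s a, 0 ≤ π' s a) (hsum : ∀ s, ∑ a, π' s a = 1)
    (hQ : ∀ s a, Q s a = R s a + γ * ∑ s', P s a s' * V s')
    (hV : ∀ s, V s = ∑ a, π s a * Q s a)
    (hQ' : ∀ s a, Q' s a = R s a + γ * ∑ s', P s a s' * V' s')
    (hV' : ∀ s, V' s = ∑ a, π' s a * Q' s a) (s : S) :
    |V' s - V s| ≤ (∑ x, |∑ a, (π x a - π' x a) * Q x a|) / (1 - γ) := by
  obtain ⟨m, hm⟩ := Finite.exists_max fun x => |V x - V' x|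
  -- The roles of the two policies are exchanged so that the fixed `Q` enters the advantage term.
  have hstep := value_sub P R γ π' π Q' Q V' V hQ' hV' hQ hV m
  have havg : |∑ a, π' m a * ∑ s', P m a s' * (V s' - V' s')| ≤ |V m - V' m| :=
    abs_sum_weight_mul_le _ _ _ (hpos m) (hsum m) fun a =>
      abs_sum_weight_mul_le _ _ _ (hP0 m a) (hP1 m a) hm
  have hadv : |∑ a, (π m a - π' m a) * Q m a| ≤ ∑ x, |∑ a, (π x a - π' x a) * Q x a| :=
    Finset.single_le_sum (f := fun x => |∑ a, (π x a - π' x a) * Q x a|)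
      (fun _ _ => abs_nonneg _) (Finset.mem_univ m)
  have htri := abs_add_le (∑ a, (π m a - π' m a) * Q m a)
    (γ * ∑ a, π' m a * ∑ s', P m a s' * (V s' - V' s'))
  rw [← hstep, abs_mul, abs_of_pos hγ0] at htri
  have hs := hm s
  rw [abs_sub_comm, le_div_iff₀ (by linarith)]
  nlinarith [mul_le_mul_of_nonneg_left havg hγ0.le,
    mul_le_mul_of_nonneg_right hs (by linarith : (0 : ℝ) ≤ 1 - γ)]

/-- The state distributions are probability vectors, so the discounted occupancies converge. -/
lemma summable_occupancy {S A : Type*} [Fintype S] [Fintype A]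
    (P : S → A → S → ℝ) (hP0 : ∀ s a s', 0 ≤ P s a s') (hP1 : ∀ s a, ∑ s', P s a s' = 1)
    (γ : ℝ) (hγ0 : 0 < γ) (hγ1 : γ < 1)
    (p₀ : S → ℝ) (hp₀0 : ∀ s, 0 ≤ p₀ s) (hp₀1 : ∑ s, p₀ s = 1)
    (π : S → A → ℝ) (hpos : ∀ s a, 0 ≤ π s a) (hsum : ∀ s, ∑ a, π s a = 1)
    (d : ℕ → S → ℝ) (hd0 : d 0 = p₀)
    (hd : ∀ t s', d (t + 1) s' = ∑ s, ∑ a, d t s * π s a * P s a s') (s : S) :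
    Summable fun t => γ ^ t * d t s := by
  have hprob : ∀ t, (∀ s, 0 ≤ d t s) ∧ ∑ s, d t s = 1 := by
    intro t
    induction t with
    | zero => exact hd0 ▸ ⟨hp₀0, hp₀1⟩
    | succ t ih =>
      refine ⟨fun s' => ?_, ?_⟩
      · rw [hd]
        exact Finset.sum_nonneg fun s _ => Finset.sum_nonneg fun a _ =>
          mul_nonneg (mul_nonneg (ih.1 s) (hpos s a)) (hP0 s a s')
      · simp only [hd]
        rw [Finset.sum_comm]
        calc ∑ s, ∑ s', ∑ a, d t s * π s a * P s a s'
            = ∑ s, d t s := Finset.sum_congr rfl fun s _ => by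
              rw [Finset.sum_comm]
              simp only [← Finset.mul_sum, hP1, mul_one, hsum]
          _ = 1 := ih.2
  refine Summable.of_nonneg_of_le (fun t => mul_nonneg (pow_nonneg hγ0.le t) ((hprob t).1 s))
    (fun t => ?_) (summable_geometric_of_lt_one hγ0.le hγ1)
  refine mul_le_of_le_one_right (pow_nonneg hγ0.le t) ?_
  rw [← (hprob t).2]
  exact Finset.single_le_sum (fun x _ => (hprob t).1 x) (Finset.mem_univ s)

/-- Flow equation: splitting off the term `t = 0`, the discounted occupancy is the initial
distribution plus `γ` times its own image under one step of the policy. -/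
lemma occupancy_flow {S A : Type*} [Fintype S] [Fintype A]
    (P : S → A → S → ℝ) (γ : ℝ) (p₀ : S → ℝ) (π : S → A → ℝ)
    (d : ℕ → S → ℝ) (hd0 : d 0 = p₀)
    (hd : ∀ t s', d (t + 1) s' = ∑ s, ∑ a, d t s * π s a * P s a s')
    (hsm : ∀ s, Summable fun t => γ ^ t * d t s) (s' : S) :
    ∑' t, γ ^ t * d t s'
      = p₀ s' + γ * ∑ s, ∑ a, (∑' t, γ ^ t * d t s) * π s a * P s a s' := by
  rw [(hsm s').tsum_eq_zero_add, pow_zero, one_mul, hd0]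
  congr 1
  have h : HasSum (fun t => γ * ∑ s, ∑ a, γ ^ t * d t s * π s a * P s a s')
      (γ * ∑ s, ∑ a, (∑' t, γ ^ t * d t s) * π s a * P s a s') :=
    (hasSum_sum fun s _ => hasSum_sum fun a _ =>
      ((hsm s).hasSum.mul_right _).mul_right _).mul_left γ
  rw [← h.tsum_eq]
  refine tsum_congr fun t => ?_
  simp only [hd, Finset.mul_sum]
  refine Finset.sum_congr rfl fun s _ => Finset.sum_congr rfl fun a _ => ?_
  ring

/-- Performance difference identity. Any `ρ` solving the flow equation of `π` turns the
recursion `value_sub` into a closed formula: the discounted averages cancel. -/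
lemma performance_difference {S A : Type*} [Fintype S] [Fintype A]
    (P : S → A → S → ℝ) (R : S → A → ℝ) (γ : ℝ) (p₀ ρ : S → ℝ)
    (π π' Q Q' : S → A → ℝ) (V V' : S → ℝ)
    (hQ : ∀ s a, Q s a = R s a + γ * ∑ s', P s a s' * V s')
    (hV : ∀ s, V s = ∑ a, π s a * Q s a)
    (hQ' : ∀ s a, Q' s a = R s a + γ * ∑ s', P s a s' * V' s')
    (hV' : ∀ s, V' s = ∑ a, π' s a * Q' s a)
    (hρ : ∀ s', ρ s' = p₀ s' + γ * ∑ s, ∑ a, ρ s * π s a * P s a s') :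
    ∑ s, p₀ s * V' s - ∑ s, p₀ s * V s
      = ∑ s, ρ s * ∑ a, (π' s a - π s a) * Q' s a := by
  have hlhs : ∑ s, ρ s * (V' s - V s) = ∑ s, ρ s * ∑ a, (π' s a - π s a) * Q' s a
      + γ * ∑ s, ρ s * ∑ a, π s a * ∑ s', P s a s' * (V' s' - V s') := by
    rw [Finset.mul_sum, ← Finset.sum_add_distrib]
    refine Finset.sum_congr rfl fun s _ => ?_
    rw [value_sub P R γ π π' Q Q' V V' hQ hV hQ' hV' s]
    ring
  have hrhs : ∑ s, ρ s * (V' s - V s) = ∑ s, p₀ s * (V' s - V s)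
      + γ * ∑ s, ρ s * ∑ a, π s a * ∑ s', P s a s' * (V' s' - V s') := by
    have hswap : ∑ s, ρ s * ∑ a, π s a * ∑ s', P s a s' * (V' s' - V s')
        = ∑ s', (∑ s, ∑ a, ρ s * π s a * P s a s') * (V' s' - V s') := by
      simp only [Finset.mul_sum, Finset.sum_mul]
      rw [Finset.sum_comm (s := (Finset.univ : Finset S)) (t := (Finset.univ : Finset S))]
      refine Finset.sum_congr rfl fun s _ => ?_
      rw [Finset.sum_comm]
      refine Finset.sum_congr rfl fun s' _ => Finset.sum_congr rfl fun a _ => ?_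
      ring
    rw [hswap, Finset.mul_sum, ← Finset.sum_add_distrib]
    refine Finset.sum_congr rfl fun s _ => ?_
    conv_lhs => rw [hρ s]
    ring
  rw [← Finset.sum_sub_distrib]
  simp only [← mul_sub]
  linarith


/-- **The policy gradient theorem** (Sutton et al.), as used to justify policy gradient
and actor-critic methods.  In a finite MDP with transitions `P`, rewards `R`, discount
`γ ∈ (0,1)`, and initial distribution `p₀`, let `θ ↦ pol θ` be a family of policies
with `θ ↦ pol θ s a` differentiable and positive (and `Σ_a pol θ s a = 1`).  Let
`V θ, Q θ` be the value functions of `pol θ` (the unique solutions of the Bellman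
equations) and `pt θ t` the state distribution after `t` steps.  Then the expected
discounted reward `J(θ) = Σ_s p₀(s) V^{pol θ}(s)` is differentiable in `θ` with
`dJ/dθ = Σ_{t=0}^∞ γ^t Σ_s p_t^{pol θ}(s) Σ_a (∂/∂θ pol θ (a|s)) Q^{pol θ}(s,a)`. -/
theorem policy_gradient_theorem {S A : Type*} [Fintype S] [Fintype A]
    [Nonempty S] [Nonempty A]
    (P : S → A → S → ℝ) (hP0 : ∀ s a s', 0 ≤ P s a s') (hP1 : ∀ s a, ∑ s', P s a s' = 1)
    (R : S → A → ℝ) (γ : ℝ) (hγ0 : 0 < γ) (hγ1 : γ < 1)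
    (p₀ : S → ℝ) (hp₀0 : ∀ s, 0 ≤ p₀ s) (hp₀1 : ∑ s, p₀ s = 1)
    (pol : ℝ → S → A → ℝ)
    (hdiff : ∀ s a, Differentiable ℝ fun θ : ℝ => pol θ s a)
    (hpos : ∀ θ s a, 0 < pol θ s a)
    (hsum : ∀ θ s, ∑ a, pol θ s a = 1)
    (Q : ℝ → S → A → ℝ) (V : ℝ → S → ℝ)
    (hQ : ∀ θ s a, Q θ s a = R s a + γ * ∑ s', P s a s' * V θ s')
    (hV : ∀ θ s, V θ s = ∑ a, pol θ s a * Q θ s a)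
    (pt : ℝ → ℕ → S → ℝ)
    (hpt0 : ∀ θ, pt θ 0 = p₀)
    (hptsucc : ∀ θ t s', pt θ (t + 1) s' = ∑ s, ∑ a, pt θ t s * pol θ s a * P s a s')
    (θ : ℝ) :
    HasDerivAt (fun θ' : ℝ => ∑ s, p₀ s * V θ' s)
      (∑' t : ℕ, γ ^ t * ∑ s, pt θ t s
        * ∑ a, deriv (fun θ' : ℝ => pol θ' s a) θ * Q θ s a) θ := by
  have hsm := summable_occupancy P hP0 hP1 γ hγ0 hγ1 p₀ hp₀0 hp₀1 (pol θ)
    (fun s a => (hpos θ s a).le) (hsum θ) (pt θ) (hpt0 θ) (hptsucc θ)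
  have hflow := occupancy_flow P γ p₀ (pol θ) (pt θ) (hpt0 θ) (hptsucc θ) hsm
  have hVlim : ∀ s, Tendsto (fun θ' => V θ' s) (𝓝 θ) (𝓝 (V θ s)) := by
    intro s
    have hbound : Tendsto
        (fun θ' => (∑ x, |∑ a, (pol θ x a - pol θ' x a) * Q θ x a|) / (1 - γ))
        (𝓝 θ) (𝓝 0) := by
      have hcont : Continuous
          fun θ' => (∑ x, |∑ a, (pol θ x a - pol θ' x a) * Q θ x a|) / (1 - γ) := by
        have hpol := fun s a => (hdiff s a).continuous
        fun_prop
      simpa using hcont.tendsto θ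
    rw [tendsto_iff_dist_tendsto_zero]
    refine squeeze_zero (fun _ => dist_nonneg) (fun θ' => ?_) hbound
    rw [Real.dist_eq]
    exact value_sub_le P hP0 hP1 R γ hγ0 hγ1 (pol θ) (pol θ') (Q θ) (Q θ') (V θ) (V θ')
      (fun s a => (hpos θ' s a).le) (hsum θ') (hQ θ) (hV θ) (hQ θ') (hV θ') s
  have hQlim : ∀ s a, Tendsto (fun θ' => Q θ' s a) (𝓝 θ) (𝓝 (Q θ s a)) := by
    intro s a
    simp only [hQ]
    exact ((tendsto_finsetSum _ fun s' _ => (hVlim s').const_mul _).const_mul γ).const_add _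
  have htsum : ∑' t : ℕ, γ ^ t * ∑ s, pt θ t s
        * ∑ a, deriv (fun θ' : ℝ => pol θ' s a) θ * Q θ s a
      = ∑ s, (∑' t, γ ^ t * pt θ t s)
        * ∑ a, deriv (fun θ' : ℝ => pol θ' s a) θ * Q θ s a := by
    rw [← (hasSum_sum fun s _ => (hsm s).hasSum.mul_right _).tsum_eq]
    refine tsum_congr fun t => ?_
    rw [Finset.mul_sum]
    exact Finset.sum_congr rfl fun s _ => by ring
  rw [htsum, hasDerivAt_iff_tendsto_slope]
  have hslope : slope (fun θ' : ℝ => ∑ s, p₀ s * V θ' s) θ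
      = fun θ' => ∑ s, (∑' t, γ ^ t * pt θ t s)
        * ∑ a, slope (fun θ' : ℝ => pol θ' s a) θ θ' * Q θ' s a := by
    funext θ'
    rw [slope_def_field, performance_difference P R γ p₀ _ (pol θ) (pol θ') (Q θ) (Q θ')
      (V θ) (V θ') (hQ θ) (hV θ) (hQ θ') (hV θ') hflow, Finset.sum_div]
    refine Finset.sum_congr rfl fun s _ => ?_
    rw [mul_div_assoc, Finset.sum_div]
    congr 1
    refine Finset.sum_congr rfl fun a _ => ?_
    rw [slope_def_field]
    ring
  rw [hslope]
  refine tendsto_finsetSum _ fun s _ => Tendsto.const_mul _ (tendsto_finsetSum _ fun a _ => ?_)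
  exact (hasDerivAt_iff_tendsto_slope.mp (hdiff s a θ).hasDerivAt).mul
    ((hQlim s a).mono_left nhdsWithin_le_nhds)
end
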